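/- Let M be any popular max-matching in G. Then there exists a stable matching S in G* such that S' = M. -/

import Mathlib

open Classical

noncomputable section

namespace PopMax

/-- A bipartite preference instance `G = (A ∪ B, E)`:
`E a b` says there is an edge between `a ∈ A` and `b ∈ B`;
`prefA a b b'` says `a` strictly prefers `b` to `b'`;
`prefB b a a'` says `b` strictly prefers `a` to `a'`. -/
structure PrefSys (A : Type*) (B : Type*) where
  E : A → B → Prop
  prefA : A → B → B → Prop
  prefB : B → A → A → Prop

/-- Every node has a strict (linear) preference order over its neighbors. -/
def PrefSys.IsValid {A B : Type*} (I : PrefSys A B) : Prop :=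
  (∀ a b, ¬ I.prefA a b b) ∧
  (∀ a b₁ b₂ b₃, I.prefA a b₁ b₂ → I.prefA a b₂ b₃ → I.prefA a b₁ b₃) ∧
  (∀ a b₁ b₂, I.E a b₁ → I.E a b₂ → b₁ ≠ b₂ → I.prefA a b₁ b₂ ∨ I.prefA a b₂ b₁) ∧
  (∀ b a, ¬ I.prefB b a a) ∧
  (∀ b a₁ a₂ a₃, I.prefB b a₁ a₂ → I.prefB b a₂ a₃ → I.prefB b a₁ a₃) ∧
  (∀ b a₁ a₂, I.E a₁ b → I.E a₂ b → a₁ ≠ a₂ → I.prefB b a₁ a₂ ∨ I.prefB b a₂ a₁)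

variable {A B : Type*}

/-- A matching: a set of pairwise disjoint edges. -/
def IsMatching (I : PrefSys A B) (M : Finset (A × B)) : Prop :=
  (∀ p ∈ M, I.E p.1 p.2) ∧
  (∀ p ∈ M, ∀ q ∈ M, p.1 = q.1 → p = q) ∧
  (∀ p ∈ M, ∀ q ∈ M, p.2 = q.2 → p = q)

def matchedA (M : Finset (A × B)) (a : A) : Prop := ∃ b, (a, b) ∈ M
def matchedB (M : Finset (A × B)) (b : B) : Prop := ∃ a, (a, b) ∈ M

/-- A maximum matching: a matching of maximum cardinality. -/
def IsMaximumMatching (I : PrefSys A B) (M : Finset (A × B)) : Prop :=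
  IsMatching I M ∧ ∀ N : Finset (A × B), IsMatching I N → N.card ≤ M.card

/-- A perfect matching matches all nodes. -/
def IsPerfectMatching (I : PrefSys A B) (M : Finset (A × B)) : Prop :=
  IsMatching I M ∧ (∀ a, matchedA M a) ∧ (∀ b, matchedB M b)

/-- `a ∈ A` prefers matching `M` to matching `N`. -/
def prefersA (I : PrefSys A B) (a : A) (M N : Finset (A × B)) : Prop :=
  ∃ b, (a, b) ∈ M ∧ (¬ matchedA N a ∨ ∃ b', (a, b') ∈ N ∧ I.prefA a b b')

/-- `b ∈ B` prefers matching `M` to matching `N`. -/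
def prefersB (I : PrefSys A B) (b : B) (M N : Finset (A × B)) : Prop :=
  ∃ a, (a, b) ∈ M ∧ (¬ matchedB N b ∨ ∃ a', (a', b) ∈ N ∧ I.prefB b a a')

/-- A node `u ∈ A ∪ B` prefers matching `M` to matching `N`. -/
def prefers (I : PrefSys A B) (u : A ⊕ B) (M N : Finset (A × B)) : Prop :=
  match u with
  | Sum.inl a => prefersA I a M N
  | Sum.inr b => prefersB I b M N

/-- `φ(M,N)`: the number of nodes preferring `M` to `N`. -/
def phi [Fintype A] [Fintype B] (I : PrefSys A B) (M N : Finset (A × B)) : ℕ :=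
  (Finset.univ.filter (fun u : A ⊕ B => prefers I u M N)).card

/-- `Δ(M,N) = φ(M,N) − φ(N,M)`. -/
def Delta [Fintype A] [Fintype B] (I : PrefSys A B) (M N : Finset (A × B)) : ℤ :=
  (phi I M N : ℤ) - (phi I N M : ℤ)

/-- A popular max-matching: a maximum matching `M` with `Δ(M,N) ≥ 0`
for every maximum matching `N`. -/
def IsPopularMaxMatching [Fintype A] [Fintype B] (I : PrefSys A B)
    (M : Finset (A × B)) : Prop :=
  IsMaximumMatching I M ∧
    ∀ N : Finset (A × B), IsMaximumMatching I N → 0 ≤ Delta I M N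

/-- The edge `(a,b) ∉ M` blocks `M`. -/
def Blocks (I : PrefSys A B) (M : Finset (A × B)) (a : A) (b : B) : Prop :=
  I.E a b ∧ (a, b) ∉ M ∧
  (¬ matchedA M a ∨ ∃ b', (a, b') ∈ M ∧ I.prefA a b b') ∧
  (¬ matchedB M b ∨ ∃ a', (a', b) ∈ M ∧ I.prefB b a a')

/-- A stable matching: a matching with no blocking edge. -/
def IsStable (I : PrefSys A B) (S : Finset (A × B)) : Prop :=
  IsMatching I S ∧ ∀ a b, ¬ Blocks I S a b

/-- The edge weight `wt_M(a,b) ∈ {0, ±2}`. -/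
def wt (I : PrefSys A B) (M : Finset (A × B)) (a : A) (b : B) : ℤ :=
  if Blocks I M a b then 2
  else if (∃ b', (a, b') ∈ M ∧ I.prefA a b' b) ∧ (∃ a', (a', b) ∈ M ∧ I.prefB b a' a) then -2
  else 0

/-- The underlying simple graph on the node set `A ⊕ B`. -/
def graphOf (I : PrefSys A B) : SimpleGraph (A ⊕ B) :=
  SimpleGraph.fromRel (fun u w =>
    match u, w with
    | Sum.inl a, Sum.inr b => I.E a b
    | _, _ => False)

/-- The (undirected) edge `e` is an edge of the matching `M`. -/
def edgeInM (M : Finset (A × B)) (e : Sym2 (A ⊕ B)) : Prop :=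
  ∃ a b, (a, b) ∈ M ∧ e = s(Sum.inl a, Sum.inr b)

/-- Consecutive edges alternate between `M` and `E ∖ M`. -/
def altRel (M : Finset (A × B)) (e f : Sym2 (A ⊕ B)) : Prop :=
  edgeInM M e ↔ ¬ edgeInM M f

/-- An alternating path with respect to `M`. -/
def IsAltPath (I : PrefSys A B) (M : Finset (A × B)) {u w : A ⊕ B}
    (p : (graphOf I).Walk u w) : Prop :=
  p.IsPath ∧ List.Chain' (altRel M) p.edges

/-- An alternating cycle with respect to `M` (alternation also across the wrap-around). -/
def IsAltCycle (I : PrefSys A B) (M : Finset (A × B)) {w : A ⊕ B}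
    (c : (graphOf I).Walk w w) : Prop :=
  c.IsCycle ∧ List.Chain' (altRel M) (c.edges ++ c.edges.take 1)

/-- `wt_M` as a function on undirected edges. -/
def wtSym (I : PrefSys A B) (M : Finset (A × B)) : Sym2 (A ⊕ B) → ℤ :=
  Sym2.lift ⟨fun u w =>
      match u, w with
      | Sum.inl a, Sum.inr b => wt I M a b
      | Sum.inr b, Sum.inl a => wt I M a b
      | _, _ => 0,
    by rintro (a | b) (a' | b') <;> rfl⟩

/-- `wt_M(ρ) = Σ_{e ∈ ρ} wt_M(e)` for a walk `ρ`. -/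
def wtWalk (I : PrefSys A B) (M : Finset (A × B)) {u w : A ⊕ B}
    (p : (graphOf I).Walk u w) : ℤ :=
  (p.edges.map (wtSym I M)).sum

/-- The node `u ∈ A ∪ B` is unmatched in `M`. -/
def unmatchedNode (M : Finset (A × B)) : A ⊕ B → Prop
  | Sum.inl a => ¬ matchedA M a
  | Sum.inr b => ¬ matchedB M b

/-- The set of edges `(a,b) ∈ A × B` used by the walk `p`. -/
def pairsOf [Fintype A] [Fintype B] (I : PrefSys A B) {u w : A ⊕ B}
    (p : (graphOf I).Walk u w) : Finset (A × B) :=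
  Finset.univ.filter (fun ab : A × B => s(Sum.inl ab.1, Sum.inr ab.2) ∈ p.edges)

/-- `M` is Pareto-optimal: no matching `N` has `φ(N,M) > 0` and `φ(M,N) = 0`. -/
def IsParetoOptimal [Fintype A] [Fintype B] (I : PrefSys A B) (M : Finset (A × B)) : Prop :=
  ¬ ∃ N : Finset (A × B), IsMatching I N ∧ 0 < phi I N M ∧ phi I M N = 0

/-! ### The auxiliary instance `G*` -/

/-- `A* = {a_0, …, a_{n0−1} : a ∈ A}` where `n0 = |A|`. -/
abbrev AStar (A : Type*) [Fintype A] : Type _ := A × Fin (Fintype.card A)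

/-- `B* = B̃ ∪ {d_1(a), …, d_{n0−1}(a) : a ∈ A}`; the dummy node `(a, j)`
(with `j : Fin (n0 − 1)`) stands for `d_{j+1}(a)`. -/
abbrev BStar (A : Type*) (B : Type*) [Fintype A] : Type _ :=
  B ⊕ (A × Fin (Fintype.card A - 1))

/-- The auxiliary instance `G*` with its edges and preferences. -/
def starSys [Fintype A] (I : PrefSys A B) : PrefSys (AStar A) (BStar A B) where
  E := fun ai w =>
    match ai, w with
    | (a, _i), Sum.inl b => I.E a b
    | (a, i), Sum.inr (a', j) => a = a' ∧ ((i : ℕ) = (j : ℕ) ∨ (i : ℕ) = (j : ℕ) + 1)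
  prefA := fun ai u v =>
    match ai, u, v with
    | (a, _i), Sum.inl b, Sum.inl b' => I.prefA a b b'
    | (a, i), Sum.inl _b, Sum.inr (a', j) => a = a' ∧ (j : ℕ) = (i : ℕ)
    | (a, i), Sum.inr (a', j), Sum.inl _b => a = a' ∧ (j : ℕ) + 1 = (i : ℕ)
    | (a, i), Sum.inr (a', j), Sum.inr (a'', j') =>
        a = a' ∧ a = a'' ∧ (j : ℕ) + 1 = (i : ℕ) ∧ (j' : ℕ) = (i : ℕ)
  prefB := fun w x y =>
    match w, x, y with
    | Sum.inl b, (a, i), (a', i') =>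
        (i' : ℕ) < (i : ℕ) ∨ ((i : ℕ) = (i' : ℕ) ∧ I.prefB b a a')
    | Sum.inr (a, j), (a', i), (a'', i') =>
        a' = a ∧ a'' = a ∧ (i : ℕ) = (j : ℕ) ∧ (i' : ℕ) = (j : ℕ) + 1

/-- The projection `S ↦ S'`: delete edges incident to dummy nodes and replace
`(a_i, b̃)` by `(a, b)`. -/
def proj [Fintype A] [Fintype B] (S : Finset (AStar A × BStar A B)) : Finset (A × B) :=
  Finset.univ.filter (fun ab : A × B =>
    ∃ i : Fin (Fintype.card A), ((ab.1, i), (Sum.inl ab.2 : BStar A B)) ∈ S)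

/-- `a ∈ A_i` for the level partition of `A` induced by a (stable) matching `S` in `G*`:
for `i ≤ n0 − 2`, `a ∈ A_i` iff `(a_i, b̃) ∈ S` for some `b̃ ∈ B̃`;
`A_{n0−1}` consists of all remaining nodes of `A`. -/
def AtLevelA [Fintype A] (S : Finset (AStar A × BStar A B)) (a : A) (i : ℕ) : Prop :=
  (i + 1 < Fintype.card A ∧
     ∃ j : Fin (Fintype.card A), (j : ℕ) = i ∧
       ∃ b : B, ((a, j), (Sum.inl b : BStar A B)) ∈ S) ∨
  (i + 1 = Fintype.card A ∧
     ∀ j : Fin (Fintype.card A), (j : ℕ) + 1 < Fintype.card A →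
       ∀ b : B, ((a, j), (Sum.inl b : BStar A B)) ∉ S)

/-- `b ∈ B_i` for the level partition of `B` induced by a (stable) matching `S` in `G*`:
for `1 ≤ i ≤ n0 − 1`, `b ∈ B_i` iff `(a_i, b̃) ∈ S` for some `a ∈ A_i`;
`B_0` consists of all remaining nodes of `B`. -/
def AtLevelB [Fintype A] (S : Finset (AStar A × BStar A B)) (b : B) (i : ℕ) : Prop :=
  (1 ≤ i ∧ i < Fintype.card A ∧
     ∃ j : Fin (Fintype.card A), (j : ℕ) = i ∧
       ∃ a : A, AtLevelA S a i ∧ ((a, j), (Sum.inl b : BStar A B)) ∈ S) ∨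
  (i = 0 ∧ ∀ j : Fin (Fintype.card A), 1 ≤ (j : ℕ) →
       ∀ a : A, AtLevelA S a (j : ℕ) → ((a, j), (Sum.inl b : BStar A B)) ∉ S)


/-! ### Helper material -/

section Helpers

/-- `a` would rather be matched to `b` than keep its situation in `M`. -/
def upA (I : PrefSys A B) (M : Finset (A × B)) (a : A) (b : B) : Prop :=
  ¬ matchedA M a ∨ ∃ b', (a, b') ∈ M ∧ I.prefA a b b'

/-- `b` would rather be matched to `a` than keep its situation in `M`. -/
def upB (I : PrefSys A B) (M : Finset (A × B)) (a : A) (b : B) : Prop :=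
  ¬ matchedB M b ∨ ∃ a', (a', b) ∈ M ∧ I.prefB b a a'

/-- Nodes of `A` plus a phantom partner for every unmatched node of `B`. -/
abbrev VV (M : Finset (A × B)) : Type _ := A ⊕ {b : B // ¬ matchedB M b}

/-- Extended matching. -/
def Mh (M : Finset (A × B)) (x : VV M) (b : B) : Prop :=
  match x with
  | Sum.inl a => (a, b) ∈ M
  | Sum.inr p => p.1 = b

/-- Valid arcs. -/
def RR (I : PrefSys A B) (M : Finset (A × B)) (x y : VV M) : Prop :=
  match x with
  | Sum.inl a => ∀ b, Mh M y b → I.E a b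
  | Sum.inr _ => True

def alph (I : PrefSys A B) (M : Finset (A × B)) (x y : VV M) : ℤ :=
  match x with
  | Sum.inl a => if ∃ b, Mh M y b ∧ upA I M a b then 1 else -1
  | Sum.inr _ => 0

def bet (I : PrefSys A B) (M : Finset (A × B)) (x y : VV M) : ℤ :=
  if ∃ b, Mh M y b then
    (match x with
      | Sum.inl a => if ∃ b, Mh M y b ∧ upB I M a b then 1 else -1
      | Sum.inr _ => -1)
  else 0

/-- Doubled arc weight. -/
def wh (I : PrefSys A B) (M : Finset (A × B)) (x y : VV M) : ℤ :=
  if x = y then 0 else alph I M x y + bet I M x y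

theorem Mh_fun {I : PrefSys A B} {M : Finset (A × B)} (hM : IsMatching I M) {x : VV M} {b b' : B}
    (h : Mh M x b) (h' : Mh M x b') : b = b' := by
  rcases x with a | p
  · have := hM.2.1 _ h _ h' rfl
    exact (Prod.mk.inj this).2
  · exact h.symm.trans h'

theorem Mh_inj {I : PrefSys A B} {M : Finset (A × B)} (hM : IsMatching I M) {x y : VV M} {b : B}
    (h : Mh M x b) (h' : Mh M y b) : x = y := by
  rcases x with a | p <;> rcases y with a' | p'
  · have := hM.2.2 _ h _ h' rfl
    exact congrArg Sum.inl (Prod.mk.inj this).1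
  · exact absurd ⟨a, by rw [show p'.1 = b from h']; exact h⟩ p'.2
  · exact absurd ⟨a', by rw [show p.1 = b from h]; exact h'⟩ p.2
  · exact congrArg Sum.inr (Subtype.ext ((show p.1 = b from h).trans (show p'.1 = b from h').symm))

theorem Mh_ex (M : Finset (A × B)) (b : B) : ∃ x : VV M, Mh M x b := by
  by_cases h : matchedB M b
  · obtain ⟨a, ha⟩ := h
    exact ⟨Sum.inl a, ha⟩
  · exact ⟨Sum.inr ⟨b, h⟩, rfl⟩

/-- The matching obtained by shifting along a permutation. -/
def NN [Fintype A] [Fintype B] (M : Finset (A × B)) (σ : Equiv.Perm (VV M)) : Finset (A × B) :=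
  Finset.univ.filter (fun p : A × B => Mh M (σ (Sum.inl p.1)) p.2)

theorem mem_NN [Fintype A] [Fintype B] (M : Finset (A × B)) (σ : Equiv.Perm (VV M)) (a : A) (b : B) :
    (a, b) ∈ NN M σ ↔ Mh M (σ (Sum.inl a)) b := by simp [NN]

theorem NN_matching [Fintype A] [Fintype B] {I : PrefSys A B} {M : Finset (A × B)}
    (hM : IsMatching I M) (σ : Equiv.Perm (VV M)) (hσ : ∀ x, RR I M x (σ x)) :
    IsMatching I (NN M σ) := by
  refine ⟨?_, ?_, ?_⟩
  · rintro ⟨a, b⟩ h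
    rw [mem_NN] at h
    exact hσ (Sum.inl a) b h
  · rintro ⟨a, b⟩ h ⟨a', b'⟩ h' e
    rw [mem_NN] at h h'
    simp only at e
    subst e
    rw [Mh_fun hM h h']
  · rintro ⟨a, b⟩ h ⟨a', b'⟩ h' e
    rw [mem_NN] at h h'
    simp only at e
    subst e
    have := σ.injective (Mh_inj hM h h')
    rw [Sum.inl.inj this]

theorem sum_Mh [Fintype A] [Fintype B] {I : PrefSys A B} {M : Finset (A × B)}
    (hM : IsMatching I M) (σ : Equiv.Perm (VV M)) (f : B → ℤ) :
    ∑ x : VV M, ∑ b, (if Mh M (σ x) b then f b else 0) = ∑ b, f b := by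
  rw [Equiv.sum_comp σ (fun x => ∑ b, (if Mh M x b then f b else 0)), Finset.sum_comm]
  refine Finset.sum_congr rfl fun b _ => ?_
  obtain ⟨x, hx⟩ := Mh_ex M b
  rw [Finset.sum_eq_single x]
  · simp [hx]
  · intro y _ hy
    rw [if_neg]
    intro h
    exact hy (Mh_inj hM h hx)
  · simp

theorem sum_one [Fintype B] {I : PrefSys A B} {M : Finset (A × B)}
    (hM : IsMatching I M) (x : VV M) (f : B → ℤ) {b : B} (hb : Mh M x b) :
    ∑ b, (if Mh M x b then f b else 0) = f b := by
  rw [Finset.sum_eq_single b]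
  · simp [hb]
  · intro y _ hy
    rw [if_neg]
    intro h
    exact hy (Mh_fun hM h hb)
  · simp

theorem card_NN [Fintype A] [Fintype B] (M : Finset (A × B)) (σ : Equiv.Perm (VV M)) :
    ((NN M σ).card : ℤ) = ∑ a : A, ∑ b, (if Mh M (σ (Sum.inl a)) b then (1:ℤ) else 0) := by
  rw [NN, Finset.card_filter, Nat.cast_sum, Fintype.sum_prod_type]
  push_cast
  rfl

theorem NN_one [Fintype A] [Fintype B] (M : Finset (A × B)) : NN M 1 = M := by
  ext ⟨a, b⟩
  rw [mem_NN]
  rfl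

theorem card_key [Fintype A] [Fintype B] {I : PrefSys A B} {M : Finset (A × B)}
    (hM : IsMatching I M) (σ : Equiv.Perm (VV M)) :
    M.card ≤ (NN M σ).card ∧
      ((∃ p a, ¬ matchedA M a ∧ σ (Sum.inr p) = Sum.inl a) → M.card < (NN M σ).card) := by
  have h1 := sum_Mh hM σ (fun _ => 1)
  have h2 := sum_Mh hM 1 (fun _ => 1)
  rw [Fintype.sum_sum_type, ← card_NN] at h1 h2
  rw [NN_one] at h2
  have h3 : ∀ p : {b : B // ¬ matchedB M b},
      ∑ b, (if Mh M ((1 : Equiv.Perm (VV M)) (Sum.inr p)) b then (1:ℤ) else 0) = 1 := fun p =>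
    sum_one hM _ (fun _ => 1) (b := p.1) rfl
  have h4 : ∀ p : {b : B // ¬ matchedB M b},
      ∑ b, (if Mh M (σ (Sum.inr p)) b then (1:ℤ) else 0) ≤ 1 := fun p => by
    by_cases h : ∃ b, Mh M (σ (Sum.inr p)) b
    · obtain ⟨b, hb⟩ := h
      exact (sum_one hM _ (fun _ => 1) hb).le
    · push Not at h
      simp [h]
  rw [Finset.sum_congr rfl (fun p _ => h3 p)] at h2
  constructor
  · have := Finset.sum_le_sum (s := Finset.univ) (fun p _ => h4 p)
    have : (M.card : ℤ) ≤ (NN M σ).card := by linarith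
    exact_mod_cast this
  · rintro ⟨p, a, ha, hp⟩
    have := Finset.sum_lt_sum (s := Finset.univ) (fun p _ => h4 p) ⟨p, Finset.mem_univ _, by
      rw [hp]
      have : ∀ b, ¬ Mh M (Sum.inl a) b := fun b hb => ha ⟨b, hb⟩
      simp [this]⟩
    have : (M.card : ℤ) < (NN M σ).card := by linarith
    exact_mod_cast this

/-- votes -/
def vA (I : PrefSys A B) (M N : Finset (A × B)) (a : A) : ℤ :=
  (if prefersA I a N M then 1 else 0) - (if prefersA I a M N then 1 else 0)

def vB (I : PrefSys A B) (M N : Finset (A × B)) (b : B) : ℤ :=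
  (if prefersB I b N M then 1 else 0) - (if prefersB I b M N then 1 else 0)

theorem phi_eq [Fintype A] [Fintype B] (I : PrefSys A B) (M N : Finset (A × B)) :
    (phi I M N : ℤ) = ∑ a, (if prefersA I a M N then (1:ℤ) else 0) +
      ∑ b, (if prefersB I b M N then (1:ℤ) else 0) := by
  rw [phi, Finset.card_filter, Nat.cast_sum, Fintype.sum_sum_type]
  push_cast
  rfl

theorem Delta_eq [Fintype A] [Fintype B] (I : PrefSys A B) (M N : Finset (A × B)) :
    - Delta I M N = ∑ a, vA I M N a + ∑ b, vB I M N b := by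
  simp only [Delta, phi_eq, vA, vB, Finset.sum_sub_distrib]
  ring

theorem vA_ge (I : PrefSys A B) (M N : Finset (A × B)) (a : A) : -1 ≤ vA I M N a := by
  unfold vA; split_ifs <;> norm_num

theorem vB_ge (I : PrefSys A B) (M N : Finset (A × B)) (a : B) : -1 ≤ vB I M N a := by
  unfold vB; split_ifs <;> norm_num

theorem vA_up {I : PrefSys A B} (hI : I.IsValid) {M N : Finset (A × B)} (hM : IsMatching I M)
    (hN : IsMatching I N) {a : A} {b : B} (h : (a, b) ∈ N) (hu : upA I M a b) :
    vA I M N a = 1 := by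
  have h1 : prefersA I a N M := ⟨b, h, hu⟩
  have h2 : ¬ prefersA I a M N := by
    rintro ⟨c, hc, h3 | ⟨d, hd, h3⟩⟩
    · exact h3 ⟨b, h⟩
    · have e : b = d := (Prod.mk.inj (hN.2.1 _ h _ hd rfl)).2
      subst e
      rcases hu with hu | ⟨e, he, hu⟩
      · exact hu ⟨c, hc⟩
      · have e' : c = e := (Prod.mk.inj (hM.2.1 _ hc _ he rfl)).2
        subst e'
        exact hI.1 _ _ (hI.2.1 _ _ _ _ hu h3)
  simp [vA, h1, h2]

theorem vB_up {I : PrefSys A B} (hI : I.IsValid) {M N : Finset (A × B)} (hM : IsMatching I M)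
    (hN : IsMatching I N) {a : A} {b : B} (h : (a, b) ∈ N) (hu : upB I M a b) :
    vB I M N b = 1 := by
  have h1 : prefersB I b N M := ⟨a, h, hu⟩
  have h2 : ¬ prefersB I b M N := by
    rintro ⟨c, hc, h3 | ⟨d, hd, h3⟩⟩
    · exact h3 ⟨a, h⟩
    · have e : a = d := (Prod.mk.inj (hN.2.2 _ h _ hd rfl)).1
      subst e
      rcases hu with hu | ⟨e, he, hu⟩
      · exact hu ⟨c, hc⟩
      · have e' : c = e := (Prod.mk.inj (hM.2.2 _ hc _ he rfl)).1
        subst e'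
        exact hI.2.2.2.1 _ _ (hI.2.2.2.2.1 _ _ _ _ hu h3)
  simp [vB, h1, h2]

theorem vA_same {I : PrefSys A B} {M N : Finset (A × B)} {a : A}
    (h : ∀ b, (a, b) ∈ N ↔ (a, b) ∈ M) : vA I M N a = 0 := by
  simp [vA, prefersA, matchedA, h]

theorem vB_same {I : PrefSys A B} {M N : Finset (A × B)} {b : B}
    (h : ∀ a, (a, b) ∈ N ↔ (a, b) ∈ M) : vB I M N b = 0 := by
  simp [vB, prefersB, matchedB, h]

theorem perm_key [Fintype A] [Fintype B] {I : PrefSys A B} (hI : I.IsValid) {M : Finset (A × B)}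
    (hM : IsPopularMaxMatching I M) (σ : Equiv.Perm (VV M)) (hσ : ∀ x, RR I M x (σ x)) :
    ∑ x, wh I M x (σ x) ≤ 0 ∧ ∀ p a, ¬ matchedA M a → σ (Sum.inr p) ≠ Sum.inl a := by
  have hMm := hM.1.1
  have hN := NN_matching hMm σ hσ
  have hc := card_key hMm σ
  have hle := hM.1.2 _ hN
  refine ⟨?_, fun p a ha h => absurd (hc.2 ⟨p, a, ha, h⟩) (by omega)⟩
  have hD := hM.2 (NN M σ) ⟨hN, fun N' hN' => (hM.1.2 N' hN').trans hc.1⟩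
  have hD' := Delta_eq I M (NN M σ)
  rw [← sum_Mh hMm σ, Fintype.sum_sum_type] at hD'
  rw [Fintype.sum_sum_type]
  have key1 : ∀ x b, Mh M (σ x) b → σ x = x → vB I M (NN M σ) b = 0 := by
    intro x b hb hx
    apply vB_same
    intro a
    rw [mem_NN]
    constructor
    · intro h
      have := σ.injective (Mh_inj hMm h hb)
      rw [this, hx, ← this] at h
      exact h
    · intro h
      rw [hx] at hb
      have : (Sum.inl a : VV M) = x := Mh_inj hMm (show Mh M (Sum.inl a) b from h) hb
      rw [this, hx]
      exact hb
  have hA : ∀ a : A, wh I M (Sum.inl a) (σ (Sum.inl a)) ≤ vA I M (NN M σ) a +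
      ∑ b, (if Mh M (σ (Sum.inl a)) b then vB I M (NN M σ) b else 0) := by
    intro a
    by_cases hx : σ (Sum.inl a) = Sum.inl a
    · have e1 : vA I M (NN M σ) a = 0 := vA_same fun b => by rw [mem_NN, hx]; rfl
      have e2 : ∑ b, (if Mh M (σ (Sum.inl a)) b then vB I M (NN M σ) b else 0) = 0 :=
        Finset.sum_eq_zero fun b _ => by
          split_ifs with hb
          · exact key1 _ b hb hx
          · rfl
      rw [e1, e2, hx]
      simp [wh]
    · rw [wh, if_neg (Ne.symm hx)]
      apply add_le_add
      · simp only [alph]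
        split_ifs with h
        · obtain ⟨b, hb, hu⟩ := h
          exact (vA_up hI hMm hN ((mem_NN _ _ _ _).2 hb) hu).ge
        · exact vA_ge _ _ _ _
      · unfold bet
        by_cases h : ∃ b, Mh M (σ (Sum.inl a)) b
        · rw [if_pos h]
          simp only
          obtain ⟨b, hb⟩ := h
          rw [sum_one hMm _ _ hb]
          split_ifs with h
          · obtain ⟨b', hb', hu⟩ := h
            rw [Mh_fun hMm hb hb']
            exact (vB_up hI hMm hN ((mem_NN _ _ _ _).2 hb') hu).ge
          · exact vB_ge _ _ _ _
        · rw [if_neg h]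
          push Not at h
          simp [h]
  have hB : ∀ p, wh I M (Sum.inr p) (σ (Sum.inr p)) ≤
      ∑ b, (if Mh M (σ (Sum.inr p)) b then vB I M (NN M σ) b else 0) := by
    intro p
    by_cases hx : σ (Sum.inr p) = Sum.inr p
    · have e2 : ∑ b, (if Mh M (σ (Sum.inr p)) b then vB I M (NN M σ) b else 0) = 0 :=
        Finset.sum_eq_zero fun b _ => by
          split_ifs with hb
          · exact key1 _ b hb hx
          · rfl
      rw [e2, hx]
      simp [wh]
    · rw [wh, if_neg (Ne.symm hx)]
      simp only [alph, zero_add]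
      unfold bet
      by_cases h : ∃ b, Mh M (σ (Sum.inr p)) b
      · rw [if_pos h]
        simp only
        obtain ⟨b, hb⟩ := h
        rw [sum_one hMm _ _ hb]
        exact vB_ge _ _ _ _
      · rw [if_neg h]
        push Not at h
        simp [h]
  have s1 := Finset.sum_le_sum (s := Finset.univ) (fun a _ => hA a)
  have s2 := Finset.sum_le_sum (s := Finset.univ) (fun p _ => hB p)
  rw [Finset.sum_add_distrib] at s1
  linarith

/-- Total weight of a list of nodes. -/
def pw {V : Type*} (f : V → V → ℤ) : List V → ℤ
  | [] => 0
  | [_] => 0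
  | x :: y :: l => f x y + pw f (y :: l)

theorem pw_split {V : Type*} (f : V → V → ℤ) (P : List V) (a : V) (Q : List V) :
    pw f (P ++ a :: Q) = pw f (P ++ [a]) + pw f (a :: Q) := by
  induction P with
  | nil => simp [pw]
  | cons x P ih =>
    rcases P with _ | ⟨y, P⟩
    · simp [pw]
    · simp only [List.cons_append, pw] at ih ⊢
      rw [ih]; ring

theorem pw_concat {V : Type*} (f : V → V → ℤ) (P : List V) (a s : V) :
    pw f (P ++ [a] ++ [s]) = pw f (P ++ [a]) + f a s := by
  rw [List.append_assoc]
  change pw f (P ++ a :: [s]) = _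
  rw [pw_split]; simp [pw]

theorem sum_pw {V : Type*} (f : V → V → ℤ) (σ : V → V) (s : V) (L : List V)
    (h : L.map σ = L.tail ++ [s]) (hL : L ≠ []) :
    (L.map (fun x => f x (σ x))).sum = pw f (L ++ [s]) := by
  induction L with
  | nil => exact absurd rfl hL
  | cons x L ih =>
    rcases L with _ | ⟨y, L⟩
    · simp at h
      simp [pw, h]
    · simp only [List.map_cons, List.tail_cons, List.cons_append, List.cons.injEq] at h
      have := ih (by simpa using h.2) (by simp)
      simp only [List.map_cons, List.sum_cons, List.cons_append, pw] at this ⊢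
      rw [this, h.1]

theorem chain_pw {V : Type*} (R : V → V → Prop) (σ : V → V) (s : V) (L : List V)
    (h : L.map σ = L.tail ++ [s]) (hc : List.IsChain R (L ++ [s])) :
    ∀ x ∈ L, R x (σ x) := by
  induction L with
  | nil => simp
  | cons x L ih =>
    rcases L with _ | ⟨y, L⟩
    · simp at h
      simpa [h] using hc
    · simp only [List.map_cons, List.tail_cons, List.cons_append, List.cons.injEq] at h
      simp only [List.cons_append, List.isChain_cons_cons] at hc
      have := ih (by simpa using h.2) (by simpa using hc.2)
      intro z hz
      rcases List.mem_cons.1 hz with rfl | hz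
      · rw [h.1]; exact hc.1
      · exact this z hz

theorem formPerm_map {V : Type*} [DecidableEq V] (x : V) (l : List V) (h : (x :: l).Nodup) :
    (x :: l).map (x :: l).formPerm = l ++ [x] := by
  apply List.ext_getElem
  · simp
  · intro i h1 h2
    rw [List.getElem_map, List.formPerm_apply_getElem _ h]
    have h3 : i < l.length + 1 := by simpa using h1
    rcases Nat.lt_succ_iff_lt_or_eq.1 h3 with h4 | h4
    · simp only [List.length_cons]
      simp [Nat.mod_eq_of_lt (Nat.succ_lt_succ h4), List.getElem_append_left h4]
    · subst h4
      simp

theorem list_key [Fintype A] [Fintype B] {I : PrefSys A B} (hI : I.IsValid) {M : Finset (A × B)}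
    (hM : IsPopularMaxMatching I M) (x : VV M) (l : List (VV M)) (hl : (x :: l).Nodup)
    (hc : List.IsChain (RR I M) ((x :: l) ++ [x])) :
    pw (wh I M) ((x :: l) ++ [x]) ≤ 0 ∧
      ∀ p a, ¬ matchedA M a → x = Sum.inl a → (x :: l).getLast (by simp) ≠ Sum.inr p := by
  have hm := formPerm_map x l hl
  have hR : ∀ y, RR I M y ((x :: l).formPerm y) := by
    intro y
    by_cases hy : y ∈ x :: l
    · exact chain_pw (RR I M) _ x (x :: l) hm hc y hy
    · rw [List.formPerm_apply_of_notMem hy]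
      rcases y with a | p
      · intro b hb
        exact hM.1.1.1 _ hb
      · trivial
  obtain ⟨k1, k2⟩ := perm_key hI hM _ hR
  constructor
  · rw [← sum_pw (wh I M) _ x (x :: l) hm (by simp)]
    refine le_trans (le_of_eq ?_) k1
    rw [← List.sum_toFinset _ hl]
    apply Finset.sum_subset (Finset.subset_univ _)
    intro y _ hy
    rw [List.mem_toFinset] at hy
    rw [List.formPerm_apply_of_notMem hy]
    simp [wh]
  · intro p a ha hx hp
    apply k2 p a ha
    rw [← hp, List.formPerm_apply_getLast, hx]

/-- Arcs between nodes of `A`. -/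
def arc (I : PrefSys A B) (M : Finset (A × B)) (a a' : A) : Prop :=
  a ≠ a' ∧ ∃ b, (a', b) ∈ M ∧ I.E a b

def wA (I : PrefSys A B) (M : Finset (A × B)) (a a' : A) : ℤ :=
  (if ∃ b, (a', b) ∈ M ∧ upA I M a b then 1 else 0) +
    (if ∃ b, (a', b) ∈ M ∧ upB I M a b then 1 else 0) - 1

theorem wh_inl {I : PrefSys A B} {M : Finset (A × B)} {a a' : A} (h : arc I M a a') :
    wh I M (Sum.inl a) (Sum.inl a') = 2 * wA I M a a' := by
  obtain ⟨hne, b, hb, -⟩ := h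
  have h1 : (Sum.inl a : VV M) ≠ Sum.inl a' := fun e => hne (Sum.inl.inj e)
  have h2 : ∃ b, Mh M (Sum.inl a') b := ⟨b, hb⟩
  rw [wh, if_neg h1, bet, if_pos h2]
  simp only [alph, Mh, wA]
  by_cases k1 : ∃ b, (a', b) ∈ M ∧ upA I M a b <;>
    by_cases k2 : ∃ b, (a', b) ∈ M ∧ upB I M a b <;>
    simp only [k1, k2, if_true, if_false] <;> norm_num

theorem RR_inl {I : PrefSys A B} {M : Finset (A × B)} (hM : IsMatching I M) {a a' : A}
    (h : arc I M a a') : RR I M (Sum.inl a) (Sum.inl a') := by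
  obtain ⟨hne, b, hb, hE⟩ := h
  intro c hc
  rw [Mh_fun hM hc (show Mh M (Sum.inl a') b from hb)]
  exact hE

theorem pw_map {I : PrefSys A B} {M : Finset (A × B)} (l : List A)
    (h : List.IsChain (arc I M) l) :
    pw (wh I M) (l.map Sum.inl) = 2 * pw (wA I M) l := by
  induction l with
  | nil => simp [pw]
  | cons x l ih =>
    rcases l with _ | ⟨y, l⟩
    · simp [pw]
    · rw [List.isChain_cons_cons] at h
      have := ih h.2
      simp only [List.map_cons, pw] at this ⊢
      rw [this, wh_inl h.1]; ring

theorem chain_map {I : PrefSys A B} {M : Finset (A × B)} (hM : IsMatching I M) (l : List A)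
    (h : List.IsChain (arc I M) l) :
    List.IsChain (RR I M) (l.map Sum.inl) := by
  rw [List.isChain_map]
  exact h.imp fun _ _ h => RR_inl hM h

theorem wA_le (I : PrefSys A B) (M : Finset (A × B)) (a a' : A) : wA I M a a' ≤ 1 := by
  unfold wA; split_ifs <;> norm_num

theorem pw_le (I : PrefSys A B) (M : Finset (A × B)) (x : A) (l : List A) :
    pw (wA I M) (x :: l) ≤ l.length := by
  induction l generalizing x with
  | nil => simp [pw]
  | cons y l ih =>
    have := ih y
    have := wA_le I M x y
    simp only [pw, List.length_cons]
    push_cast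
    linarith

theorem cycle_key [Fintype A] [Fintype B] {I : PrefSys A B} (hI : I.IsValid) {M : Finset (A × B)}
    (hM : IsPopularMaxMatching I M) (a : A) (P : List A) (hn : (a :: P).Nodup)
    (hc : List.IsChain (arc I M) ((a :: P) ++ [a])) : pw (wA I M) ((a :: P) ++ [a]) ≤ 0 := by
  have h1 := chain_map hM.1.1 _ hc
  have h2 := pw_map _ hc
  have h3 := list_key hI hM (Sum.inl a) (P.map Sum.inl)
    (by simpa using (List.nodup_map_iff (f := (Sum.inl : A → VV M)) Sum.inl_injective).2 hn)
    (by simpa using h1)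
  have h4 := h3.1
  rw [List.map_append] at h2
  change pw (wh I M) ((Sum.inl a :: P.map Sum.inl) ++ [Sum.inl a]) = _ at h2
  linarith

theorem wh_ge (I : PrefSys A B) (M : Finset (A × B)) (z a : A) (ha : ¬ matchedA M a) :
    -1 ≤ wh I M (Sum.inl z) (Sum.inl a) := by
  have h2 : ¬ ∃ b, Mh M (Sum.inl a) b := ha
  rw [wh, bet, if_neg h2]
  simp only [alph]
  split_ifs <;> norm_num

theorem wh_ge' (I : PrefSys A B) (M : Finset (A × B)) (p) (a : A) :
    -1 ≤ wh I M (Sum.inr p) (Sum.inl a) := by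
  rw [wh, bet]
  simp only [alph]
  split_ifs <;> norm_num

theorem wh_term (I : PrefSys A B) (M : Finset (A × B)) (p) (a : A) :
    wh I M (Sum.inl a) (Sum.inr p) = if upA I M a p.1 then 2 else 0 := by
  have h1 : ∃ b, Mh M (Sum.inr p) b := ⟨p.1, rfl⟩
  have h2 : ∃ b, Mh M (Sum.inr p) b ∧ upB I M a b := ⟨p.1, rfl, Or.inl p.2⟩
  rw [wh, bet, if_pos h1, if_neg (by simp)]
  simp only [alph]
  rw [if_pos h2]
  simp [Mh]
  split_ifs <;> norm_num

theorem unm_key [Fintype A] [Fintype B] {I : PrefSys A B} (hI : I.IsValid) {M : Finset (A × B)}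
    (hM : IsPopularMaxMatching I M) (a : A) (P : List A) (hn : (a :: P).Nodup)
    (hc : List.IsChain (arc I M) (a :: P)) (ha : ¬ matchedA M a) :
    pw (wA I M) (a :: P) ≤ 0 := by
  have h1 := chain_map hM.1.1 _ hc
  have h2 := pw_map _ hc
  obtain ⟨Q, z, hQ⟩ : ∃ Q z, a :: P = Q ++ [z] :=
    ⟨(a :: P).dropLast, (a :: P).getLast (by simp), (List.dropLast_append_getLast _).symm⟩
  have hR : RR I M (Sum.inl z) (Sum.inl a) := fun b hb => absurd ⟨b, hb⟩ ha
  have h3 := list_key hI hM (Sum.inl a) (P.map Sum.inl)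
    (by simpa using (List.nodup_map_iff (f := (Sum.inl : A → VV M)) Sum.inl_injective).2 hn)
    (by
      rw [← List.map_cons, List.isChain_append]
      refine ⟨h1, by simp, ?_⟩
      intro x hx y hy
      rw [hQ] at hx
      simp at hx hy
      subst hx hy
      exact hR)
  have h4 := h3.1
  rw [← List.map_cons, hQ, List.map_append, List.map_singleton, pw_concat] at h4
  rw [hQ, List.map_append, List.map_singleton] at h2
  rw [hQ]
  have := wh_ge I M z a ha
  omega

theorem term_key [Fintype A] [Fintype B] {I : PrefSys A B} (hI : I.IsValid) {M : Finset (A × B)}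
    (hM : IsPopularMaxMatching I M) (a : A) (P : List A) (hn : (a :: P).Nodup)
    (hc : List.IsChain (arc I M) (a :: P)) (Q : List A) (z : A) (hQ : a :: P = Q ++ [z])
    (b : B) (hb : ¬ matchedB M b) (hE : I.E z b) :
    pw (wA I M) (a :: P) + (if upA I M z b then 1 else 0) ≤ 0 ∧ matchedA M a := by
  have h1 := chain_map hM.1.1 _ hc
  have h2 := pw_map _ hc
  have hR : RR I M (Sum.inl z) (Sum.inr ⟨b, hb⟩) := fun c hc => by
    rw [← show b = c from hc]; exact hE
  have hnn := (List.nodup_map_iff (f := (Sum.inl : A → VV M)) Sum.inl_injective).2 hn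
  have h3 := list_key hI hM (Sum.inl a) (P.map Sum.inl ++ [Sum.inr ⟨b, hb⟩])
    (by
      rw [← List.cons_append, ← List.map_cons, List.nodup_append]
      refine ⟨hnn, by simp, ?_⟩
      simp)
    (by
      rw [← List.cons_append, ← List.map_cons, List.isChain_append, List.isChain_append]
      refine ⟨⟨h1, by simp, ?_⟩, by simp, ?_⟩
      · intro x hx y hy
        rw [hQ] at hx
        simp at hx hy
        subst hx hy
        exact hR
      · intro x hx y hy
        rw [List.getLast?_concat] at hx
        simp at hx
        subst hx
        trivial)
  refine ⟨?_, ?_⟩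
  · have h4 := h3.1
    rw [← List.cons_append, ← List.map_cons, pw_concat, hQ, List.map_append, List.map_singleton,
      pw_concat, wh_term] at h4
    rw [hQ, List.map_append, List.map_singleton] at h2
    rw [hQ]
    have := wh_ge' I M ⟨b, hb⟩ a
    simp only at h4
    split_ifs at h4 ⊢ <;> omega
  · by_contra ha
    exact h3.2 ⟨b, hb⟩ a ha rfl (by simp)

/-- Terminal nodes: adjacent to an unmatched node of `B`. -/
def isTerm (I : PrefSys A B) (M : Finset (A × B)) (a : A) : Prop :=
  ∃ b, ¬ matchedB M b ∧ I.E a b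

def val [Fintype A] (I : PrefSys A B) (M : Finset (A × B)) (l : List A) : ℤ :=
  pw (wA I M) l + (if ∃ Q z, l = Q ++ [z] ∧ isTerm I M z then (Fintype.card A : ℤ) - 1 else 0)

theorem val_split [Fintype A] (I : PrefSys A B) (M : Finset (A × B)) (P : List A) (a : A)
    (Q : List A) : val I M (P ++ a :: Q) = pw (wA I M) (P ++ [a]) + val I M (a :: Q) := by
  have h : (∃ R z, P ++ a :: Q = R ++ [z] ∧ isTerm I M z) ↔
      (∃ R z, a :: Q = R ++ [z] ∧ isTerm I M z) := by
    obtain ⟨S, y, hS⟩ : ∃ S y, a :: Q = S ++ [y] :=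
      ⟨(a :: Q).dropLast, (a :: Q).getLast (by simp), (List.dropLast_append_getLast _).symm⟩
    rw [hS, ← List.append_assoc]
    constructor
    · rintro ⟨R, z, h, hz⟩
      have := (List.append_inj' h rfl).2
      simp at this
      subst this
      exact ⟨S, y, rfl, hz⟩
    · rintro ⟨R, z, h, hz⟩
      have := (List.append_inj' h rfl).2
      simp at this
      subst this
      exact ⟨P ++ S, y, rfl, hz⟩
  rw [val, val, pw_split, if_congr h rfl rfl]
  ring

theorem val_le [Fintype A] [Fintype B] {I : PrefSys A B} (hI : I.IsValid) {M : Finset (A × B)}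
    (hM : IsPopularMaxMatching I M) (a : A) (P : List A) (hn : (a :: P).Nodup)
    (hc : List.IsChain (arc I M) (a :: P)) :
    val I M (a :: P) ≤ (Fintype.card A : ℤ) - 1 ∧
      (¬ matchedA M a → val I M (a :: P) ≤ 0) := by
  have hlen : P.length + 1 ≤ Fintype.card A := by simpa using hn.length_le_card
  unfold val
  split_ifs with h
  · obtain ⟨Q, z, hQ, b, hb, hE⟩ := h
    have := term_key hI hM a P hn hc Q z hQ b hb hE
    constructor
    · have := this.1
      split_ifs at this <;> linarith
    · intro h; exact absurd this.2 h
  · constructor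
    · have := pw_le I M a P
      push_cast [← @Nat.cast_le ℤ] at hlen
      linarith
    · intro ha
      have := unm_key hI hM a P hn hc ha
      linarith

theorem levels [Fintype A] [Fintype B] {I : PrefSys A B} (hI : I.IsValid) {M : Finset (A × B)}
    (hM : IsPopularMaxMatching I M) :
    ∃ ℓ : A → ℕ, (∀ a, ℓ a < Fintype.card A) ∧ (∀ a, ¬ matchedA M a → ℓ a + 1 = Fintype.card A) ∧
      (∀ a b, I.E a b → ¬ matchedB M b → ℓ a = 0 ∧ ¬ upA I M a b) ∧
      (∀ a a' b, a ≠ a' → (a', b) ∈ M → I.E a b →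
        (upA I M a b → upB I M a b → ℓ a + 1 ≤ ℓ a') ∧
        (upA I M a b ∨ upB I M a b → ℓ a ≤ ℓ a') ∧ ℓ a ≤ ℓ a' + 1) := by
  have hex : ∀ a : A, ∃ m : ℤ,
      (∃ P, (a :: P).Nodup ∧ List.IsChain (arc I M) (a :: P) ∧ val I M (a :: P) = m) ∧
      ∀ z, (∃ P, (a :: P).Nodup ∧ List.IsChain (arc I M) (a :: P) ∧ val I M (a :: P) = z) →
        z ≤ m := by
    intro a
    apply Int.exists_greatest_of_bdd
    · refine ⟨(Fintype.card A : ℤ) - 1, ?_⟩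
      rintro z ⟨P, h1, h2, rfl⟩
      exact (val_le hI hM a P h1 h2).1
    · exact ⟨_, [], by simp, by simp, rfl⟩
  choose m hm1 hm2 using hex
  have hcard : ∀ a : A, 1 ≤ Fintype.card A := fun a => Fintype.card_pos_iff.2 ⟨a⟩
  have hlow : ∀ a, 0 ≤ m a ∧ (isTerm I M a → (Fintype.card A : ℤ) - 1 ≤ m a) := by
    intro a
    have h := hm2 a _ ⟨[], by simp, by simp, rfl⟩
    have hc := hcard a
    unfold val at h
    simp only [pw, zero_add] at h
    constructor
    · refine le_trans ?_ h
      split_ifs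
      · omega
      · rfl
    · intro ht
      rw [if_pos ⟨[], a, by simp, ht⟩] at h
      exact h
  have hup : ∀ a, m a ≤ (Fintype.card A : ℤ) - 1 ∧ (¬ matchedA M a → m a ≤ 0) := by
    intro a
    obtain ⟨P, h1, h2, h3⟩ := hm1 a
    rw [← h3]
    exact val_le hI hM a P h1 h2
  have harc : ∀ a a', arc I M a a' → m a' + wA I M a a' ≤ m a := by
    intro a a' h
    obtain ⟨P, h1, h2, h3⟩ := hm1 a'
    have hch : List.IsChain (arc I M) (a :: a' :: P) := List.isChain_cons_cons.2 ⟨h, h2⟩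
    have hv : val I M (a :: a' :: P) = m a' + wA I M a a' := by
      have := val_split I M [a] a' P
      simp only [List.cons_append, List.nil_append, pw] at this
      rw [this, h3]; ring
    by_cases hmem : a ∈ a' :: P
    · obtain ⟨P1, P2, hP⟩ := List.append_of_mem hmem
      rw [hP] at hv hch h1
      have hs := val_split I M (a :: P1) a P2
      have hch' : List.IsChain (arc I M) ((a :: P1 ++ [a]) ++ P2) := by simpa using hch
      have hn : (a :: P1).Nodup := by
        have := List.nodup_middle.1 h1
        rw [← List.cons_append] at this
        exact this.of_append_left
      have hcy := cycle_key hI hM a P1 hn (List.isChain_append.1 hch').1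
      have hch2 : List.IsChain (arc I M) ((a :: P1) ++ (a :: P2)) := by simpa using hch
      have := hm2 a _ ⟨P2, h1.of_append_right, (List.isChain_append.1 hch2).2.1, rfl⟩
      simp only [List.cons_append] at hs hcy
      linarith
    · rw [← hv]
      exact hm2 a _ ⟨a' :: P, List.nodup_cons.2 ⟨hmem, h1⟩, hch, rfl⟩
  refine ⟨fun a => ((Fintype.card A : ℤ) - 1 - m a).toNat, ?_, ?_, ?_, ?_⟩
  · intro a
    have := hcard a; have := hlow a; have := hup a
    simp only
    omega
  · intro a ha
    have := hcard a; have := (hlow a).1; have := (hup a).2 ha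
    simp only
    omega
  · intro a b hE hb
    have h1 := (hlow a).2 ⟨b, hb, hE⟩
    have h2 := (term_key hI hM a [] (by simp) (by simp) [] a rfl b hb hE).1
    refine ⟨by simp only; omega, ?_⟩
    intro hu
    rw [if_pos hu] at h2
    simp [pw] at h2
  · intro a a' b hne hb hE
    have h := harc a a' ⟨hne, b, hb, hE⟩
    have l1 := hlow a; have l2 := hlow a'; have l3 := (hup a).1; have l4 := (hup a').1
    have e1 : upA I M a b → ∃ b, (a', b) ∈ M ∧ upA I M a b := fun h => ⟨b, hb, h⟩
    have e2 : upB I M a b → ∃ b, (a', b) ∈ M ∧ upB I M a b := fun h => ⟨b, hb, h⟩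
    unfold wA at h
    refine ⟨?_, ?_, ?_⟩
    · intro k1 k2
      rw [if_pos (e1 k1), if_pos (e2 k2)] at h
      simp only; omega
    · rintro (k | k)
      · rw [if_pos (e1 k)] at h
        simp only; split_ifs at h <;> omega
      · rw [if_pos (e2 k)] at h
        simp only; split_ifs at h <;> omega
    · simp only; split_ifs at h <;> omega

end Helpers

/-- Every popular max-matching `M` in `G` is the image of a stable
matching in `G*`: there is a stable matching `S` in `G*` with `S' = M`. -/
theorem stmt14 {A B : Type*} [Fintype A] [Fintype B] [DecidableEq A] [DecidableEq B]
    (I : PrefSys A B) (hI : I.IsValid) (M : Finset (A × B))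
    (hM : IsPopularMaxMatching I M) :
    ∃ S : Finset (AStar A × BStar A B), IsStable (starSys I) S ∧ proj S = M := by
  obtain ⟨ℓ, hlt, hunm, hterm, harc⟩ := levels hI hM
  have hMm := hM.1.1
  let S : Finset (AStar A × BStar A B) := Finset.univ.filter (fun q =>
    match q with
    | ((a, i), Sum.inl b) => (a, b) ∈ M ∧ (i : ℕ) = ℓ a
    | ((a, i), Sum.inr (a', j)) => a = a' ∧
        (((i : ℕ) = (j : ℕ) ∧ (i : ℕ) < ℓ a) ∨ ((i : ℕ) = (j : ℕ) + 1 ∧ ℓ a < (i : ℕ))))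
  have memL : ∀ a i b, (((a, i), Sum.inl b) : AStar A × BStar A B) ∈ S ↔
      (a, b) ∈ M ∧ (i : ℕ) = ℓ a := by
    intro a i b; simp [S]
  have memR : ∀ a i a' j, (((a, i), Sum.inr (a', j)) : AStar A × BStar A B) ∈ S ↔
      a = a' ∧
        (((i : ℕ) = (j : ℕ) ∧ (i : ℕ) < ℓ a) ∨ ((i : ℕ) = (j : ℕ) + 1 ∧ ℓ a < (i : ℕ))) := by
    intro a i a' j; simp [S]
  refine ⟨S, ⟨⟨?_, ?_, ?_⟩, ?_⟩, ?_⟩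
  · rintro ⟨⟨a, i⟩, b | ⟨a', j⟩⟩ h
    · rw [memL] at h
      exact hMm.1 _ h.1
    · rw [memR] at h
      exact ⟨h.1, by omega⟩
  · rintro ⟨⟨a, i⟩, b | ⟨a', j⟩⟩ h ⟨⟨a₂, i₂⟩, b₂ | ⟨a₂', j₂⟩⟩ h' e
    · rw [memL] at h h'
      obtain ⟨rfl, rfl⟩ := Prod.mk.inj e
      have := (Prod.mk.inj (hMm.2.1 _ h.1 _ h'.1 rfl)).2
      rw [this]
    · rw [memL] at h; rw [memR] at h'
      obtain ⟨rfl, rfl⟩ := Prod.mk.inj e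
      omega
    · rw [memR] at h; rw [memL] at h'
      obtain ⟨rfl, rfl⟩ := Prod.mk.inj e
      omega
    · rw [memR] at h h'
      obtain ⟨rfl, rfl⟩ := Prod.mk.inj e
      obtain ⟨rfl, h⟩ := h
      obtain ⟨rfl, h'⟩ := h'
      have : j = j₂ := Fin.ext (by omega)
      rw [this]
  · rintro ⟨⟨a, i⟩, b | ⟨a', j⟩⟩ h ⟨⟨a₂, i₂⟩, b₂ | ⟨a₂', j₂⟩⟩ h' e
    · rw [memL] at h h'
      simp only [Sum.inl.injEq] at e
      subst e
      have := (Prod.mk.inj (hMm.2.2 _ h.1 _ h'.1 rfl)).1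
      subst this
      have : i = i₂ := Fin.ext (by omega)
      rw [this]
    · simp at e
    · simp at e
    · rw [memR] at h h'
      simp only [Sum.inr.injEq] at e
      obtain ⟨rfl, rfl⟩ := Prod.mk.inj e
      obtain ⟨rfl, h⟩ := h
      obtain ⟨rfl, h'⟩ := h'
      have : i = i₂ := Fin.ext (by omega)
      rw [this]
  · rintro ⟨a, i⟩ (b | ⟨a', j⟩) ⟨hE, hnot, hA, hB⟩
    · have hE : I.E a b := hE
      have hi := i.2
      rw [memL] at hnot
      -- what `a_i` says
      have hA' : (i : ℕ) < ℓ a ∨ ((i : ℕ) = ℓ a ∧ upA I M a b) := by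
        rcases lt_trichotomy (i : ℕ) (ℓ a) with h | h | h
        · exact Or.inl h
        · refine Or.inr ⟨h, ?_⟩
          rcases hA with hA | ⟨w | ⟨a', j⟩, hw, hp⟩
          · left
            rintro ⟨c, hc⟩
            exact hA ⟨Sum.inl c, (memL _ _ _).2 ⟨hc, h⟩⟩
          · exact Or.inr ⟨w, ((memL _ _ _).1 hw).1, hp⟩
          · rw [memR] at hw
            omega
        · exfalso
          have hj : (i : ℕ) - 1 < Fintype.card A - 1 := by omega
          have hmem : (((a, i), Sum.inr (a, ⟨(i : ℕ) - 1, hj⟩)) : AStar A × BStar A B) ∈ S :=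
            (memR _ _ _ _).2 ⟨rfl, Or.inr ⟨by simp only; omega, h⟩⟩
          rcases hA with hA | ⟨w | ⟨a', j⟩, hw, hp⟩
          · exact hA ⟨_, hmem⟩
          · rw [memL] at hw
            omega
          · rw [memR] at hw
            have hp : a = a' ∧ (j : ℕ) = (i : ℕ) := hp
            omega
      by_cases hb : matchedB M b
      · obtain ⟨a', ha'⟩ := hb
        have hj := hlt a'
        have hmem : (((a', ⟨ℓ a', hj⟩), Sum.inl b) : AStar A × BStar A B) ∈ S :=
          (memL _ _ _).2 ⟨ha', rfl⟩
        have hB' : ℓ a' < (i : ℕ) ∨ ((i : ℕ) = ℓ a' ∧ I.prefB b a a') := by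
          rcases hB with hB | ⟨⟨a₂, i₂⟩, hw, hp⟩
          · exact absurd ⟨_, hmem⟩ hB
          · rw [memL] at hw
            have := (Prod.mk.inj (hMm.2.2 _ hw.1 _ ha' rfl)).1
            subst this
            have hp : (i₂ : ℕ) < (i : ℕ) ∨ ((i : ℕ) = (i₂ : ℕ) ∧ I.prefB b a a₂) := hp
            rcases hp with hp | ⟨hp, hq⟩
            · left; omega
            · right; exact ⟨by omega, hq⟩
        have hne : a ≠ a' := by
          rintro rfl
          rcases hB' with h | ⟨h, h2⟩
          · omega
          · exact hI.2.2.2.1 _ _ h2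
        obtain ⟨c1, c2, c3⟩ := harc a a' b hne ha' hE
        have hBu : I.prefB b a a' → upB I M a b := fun h => Or.inr ⟨a', ha', h⟩
        rcases hA' with h | ⟨h, hu⟩ <;> rcases hB' with h' | ⟨h', hp⟩
        · omega
        · have := c2 (Or.inr (hBu hp)); omega
        · have := c2 (Or.inl hu); omega
        · have := c1 hu (hBu hp); omega
      · have := hterm a b hE hb
        rcases hA' with h | ⟨h, hu⟩
        · omega
        · exact this.2 hu
    · obtain ⟨rfl, hE⟩ : a = a' ∧ ((i : ℕ) = (j : ℕ) ∨ (i : ℕ) = (j : ℕ) + 1) := hE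
      rw [memR] at hnot
      have hi := i.2
      have hj := j.2
      have hl := hlt a
      rcases hE with hE | hE
      · -- last choice of `a_i`
        rcases hA with hA | ⟨w | ⟨a', j'⟩, hw, hp⟩
        · have hle : ℓ a ≤ (i : ℕ) := by
            by_contra hcon
            exact hnot ⟨rfl, Or.inl ⟨hE, by omega⟩⟩
          rcases hle.eq_or_lt with h | h
          · have hm : matchedA M a := by
              by_contra hm
              have := hunm a hm
              omega
            obtain ⟨c, hc⟩ := hm
            exact hA ⟨Sum.inl c, (memL _ _ _).2 ⟨hc, h.symm⟩⟩
          · exact hA ⟨Sum.inr (a, ⟨(i : ℕ) - 1, by omega⟩),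
              (memR _ _ _ _).2 ⟨rfl, Or.inr ⟨by simp only; omega, h⟩⟩⟩
        · have hp : a = a ∧ (j : ℕ) + 1 = (i : ℕ) := hp
          omega
        · have hp : a = a ∧ a = a' ∧ (j : ℕ) + 1 = (i : ℕ) ∧ (j' : ℕ) = (i : ℕ) := hp
          omega
      · -- last choice of the dummy node
        rcases hB with hB | ⟨⟨a₂, i₂⟩, hw, hp⟩
        · by_cases h : (j : ℕ) < ℓ a
          · exact hB ⟨(a, ⟨j, by omega⟩), (memR _ _ _ _).2 ⟨rfl, Or.inl ⟨rfl, h⟩⟩⟩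
          · exact hnot ⟨rfl, Or.inr ⟨hE, by omega⟩⟩
        · have hp : a = a ∧ a₂ = a ∧ (i : ℕ) = (j : ℕ) ∧ (i₂ : ℕ) = (j : ℕ) + 1 := hp
          omega
  · ext ⟨a, b⟩
    simp only [proj, Finset.mem_filter, Finset.mem_univ, true_and]
    constructor
    · rintro ⟨i, h⟩
      exact ((memL _ _ _).1 h).1
    · intro h
      exact ⟨⟨ℓ a, hlt a⟩, (memL _ _ _).2 ⟨h, rfl⟩⟩

end PopMax
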